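/- Let f : R^n -> R be twice continuously differentiable with all second-order partial derivatives bounded, and let U and W be independent centered Gaussian vectors in R^n with covariance matrices Σ̃ = (σ̃_{ij}) and Σ = (σ_{ij}) respectively. Then |E f(W) - E f(U)| <= (1/2) L_2 * sum_{i,j} |σ_{ij} - σ̃_{ij}|, where L_2 bounds all mixed second partials of f. -/

import Mathlib

open MeasureTheory ProbabilityTheory Finset

/-- Scaling of a measure. -/
noncomputable def scal {n : ℕ} (a : ℝ) (μ : Measure (Fin n → ℝ)) : Measure (Fin n → ℝ) :=
  μ.map (a • ContinuousLinearMap.id ℝ (Fin n → ℝ))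

instance scal_gauss {n : ℕ} (a : ℝ) (μ : Measure (Fin n → ℝ)) [IsGaussian μ] :
    IsGaussian (scal a μ) := by
  unfold scal; infer_instance

lemma integral_scal {n : ℕ} (a : ℝ) (μ : Measure (Fin n → ℝ)) (g : (Fin n → ℝ) → ℝ)
    (hg : Continuous g) : ∫ x, g x ∂(scal a μ) = ∫ x, g (a • x) ∂μ := by
  unfold scal
  rw [integral_map (by fun_prop) hg.aestronglyMeasurable]
  rfl

lemma scal_conv {n : ℕ} (a b : ℝ) (μ : Measure (Fin n → ℝ)) [IsGaussian μ]
    (hμ : ∫ x, x ∂μ = 0) :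
    (scal a μ).conv (scal b μ) = scal (√(a ^ 2 + b ^ 2)) μ := by
  refine Measure.ext_of_charFunDual ?_
  ext L
  have hc : ∀ c : ℝ, L.comp (c • ContinuousLinearMap.id ℝ (Fin n → ℝ)) = c • L := by
    intro c; ext; simp
  have hv : ∀ c : ℝ, Var[(c • L : StrongDual ℝ (Fin n → ℝ)); μ] = c ^ 2 * Var[L; μ] := by
    intro c; rw [← variance_const_mul]; rfl
  rw [charFunDual_conv]
  unfold scal
  simp_rw [charFunDual_map, IsGaussian.charFunDual_eq_of_integral_eq_zero (μ := μ) hμ, ← Complex.exp_add, hc, hv]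
  rw [Real.sq_sqrt (by positivity)]
  congr 1
  push_cast
  ring

lemma taylor2 {n : ℕ} (f : (Fin n → ℝ) → ℝ) (hf : ContDiff ℝ 2 f) (y v : Fin n → ℝ) :
    ∃ θ ∈ Set.Ioo (0 : ℝ) 1, f (y + v) = f y + fderiv ℝ f y v
      + 1 / 2 * fderiv ℝ (fderiv ℝ f) (y + θ • v) v v := by
  have hl : ∀ s : ℝ, HasDerivAt (fun s : ℝ => y + s • v) v s := by
    intro s
    simpa using ((hasDerivAt_id s).smul_const v).const_add y
  have hd : Differentiable ℝ f := hf.differentiable (by norm_num)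
  have hd2 : Differentiable ℝ (fderiv ℝ f) :=
    (hf.fderiv_right (m := 1) (by norm_num)).differentiable (by norm_num)
  let F' : ℝ → ℝ := fun s => fderiv ℝ f (y + s • v) v
  let F'' : ℝ → ℝ := fun s => fderiv ℝ (fderiv ℝ f) (y + s • v) v v
  have h1 : ∀ s, HasDerivAt (fun s : ℝ => f (y + s • v)) (F' s) s := fun s =>
    (hd _).hasFDerivAt.comp_hasDerivAt s (hl s)
  have h2 : ∀ s, HasDerivAt F' (F'' s) s := fun s => by
    have := (hd2 _).hasFDerivAt.comp_hasDerivAt s (hl s)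
    simpa using this.clm_apply (hasDerivAt_const s v)
  let G : ℝ → ℝ := fun s => f (y + s • v) + (1 - s) * F' s
  have hG : ∀ s, HasDerivAt G ((1 - s) * F'' s) s := fun s => by
    have := (h1 s).add ((((hasDerivAt_id s).const_sub 1)).mul (h2 s))
    convert! this using 1
    simp
  let K : ℝ → ℝ := fun s => -(1 - s) ^ 2 / 2
  have hK : ∀ s, HasDerivAt K (1 - s) s := fun s => by
    have := ((((hasDerivAt_id s).const_sub 1).pow 2).neg).div_const 2
    convert! this using 1
    simp
  obtain ⟨θ, hθ, h⟩ := exists_ratio_hasDerivAt_eq_ratio_slope G _ (zero_lt_one) 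
    (fun s _ => (hG s).continuousAt.continuousWithinAt) (fun s _ => hG s) K _ 
    (fun s _ => (hK s).continuousAt.continuousWithinAt) (fun s _ => hK s) 
  refine ⟨θ, hθ, ?_⟩
  have hne : (1 - θ) ≠ 0 := by linarith [hθ.2]
  simp only [G, K, F', F''] at h
  simp at h
  have : (1 - θ) * ((f (y + v) - (f y + fderiv ℝ f y v)) - 1 / 2 * fderiv ℝ (fderiv ℝ f) (y + θ • v) v v) = 0 := by
    linarith
  rcases mul_eq_zero.1 this with h | h
  · exact absurd h hne
  · linarith

lemma hess_expand {n : ℕ} (B : (Fin n → ℝ) →L[ℝ] (Fin n → ℝ) →L[ℝ] ℝ) (v : Fin n → ℝ) :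
    B v v = ∑ i, ∑ j, v i * v j * B (Pi.single i 1) (Pi.single j 1) := by
  have hv : v = ∑ i, v i • (Pi.single i 1 : Fin n → ℝ) := by
    ext k; simp [Finset.sum_apply, Pi.single_apply]
  conv_lhs => rw [hv]
  simp only [map_sum, map_smul, _root_.sum_apply, _root_.smul_apply, smul_eq_mul, Finset.mul_sum]
  rw [Finset.sum_comm]
  simp only [mul_assoc, mul_left_comm]

lemma hess_bound {n : ℕ} (B : (Fin n → ℝ) →L[ℝ] (Fin n → ℝ) →L[ℝ] ℝ) (L : ℝ)
    (hB : ∀ i j, |B (Pi.single i 1) (Pi.single j 1)| ≤ L) (v : Fin n → ℝ) :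
    |B v v| ≤ (n ^ 2 * |L|) * ‖v‖ ^ 2 := by
  rw [hess_expand]
  calc _ ≤ ∑ i : Fin n, ∑ j : Fin n, ‖v‖ * ‖v‖ * |L| := by
        refine (abs_sum_le_sum_abs _ _).trans (sum_le_sum fun i _ => ?_)
        refine (abs_sum_le_sum_abs _ _).trans (sum_le_sum fun j _ => ?_)
        rw [abs_mul, abs_mul]
        have h1 := norm_le_pi_norm v i
        have h2 := norm_le_pi_norm v j
        rw [Real.norm_eq_abs] at h1 h2
        have h3 := (hB i j).trans (le_abs_self L)
        gcongr
    _ = _ := by simp; ring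

/-- Second order Taylor remainder. -/
noncomputable def rem {n : ℕ} (f : (Fin n → ℝ) → ℝ) (y v : Fin n → ℝ) : ℝ :=
  f (y + v) - f y - fderiv ℝ f y v - 1 / 2 * fderiv ℝ (fderiv ℝ f) y v v

lemma cont_d1 {n : ℕ} {f : (Fin n → ℝ) → ℝ} (hf : ContDiff ℝ 2 f) : Continuous (fderiv ℝ f) :=
  hf.continuous_fderiv (by norm_num)

lemma cont_d2 {n : ℕ} {f : (Fin n → ℝ) → ℝ} (hf : ContDiff ℝ 2 f) :
    Continuous (fderiv ℝ (fderiv ℝ f)) :=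
  (hf.fderiv_right (m := 1) (by norm_num)).continuous_fderiv (by norm_num)

lemma rem_cont {n : ℕ} {f : (Fin n → ℝ) → ℝ} (hf : ContDiff ℝ 2 f) :
    Continuous (fun p : (Fin n → ℝ) × (Fin n → ℝ) => rem f p.1 p.2) := by
  have h0 := hf.continuous
  have h1 := cont_d1 hf
  have h2 := cont_d2 hf
  unfold rem
  fun_prop

lemma rem_eq {n : ℕ} {f : (Fin n → ℝ) → ℝ} (hf : ContDiff ℝ 2 f) (y v : Fin n → ℝ) :
    ∃ θ ∈ Set.Ioo (0 : ℝ) 1, rem f y v =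
      1 / 2 * (fderiv ℝ (fderiv ℝ f) (y + θ • v) v v - fderiv ℝ (fderiv ℝ f) y v v) := by
  obtain ⟨θ, hθ, h⟩ := taylor2 f hf y v
  refine ⟨θ, hθ, ?_⟩
  unfold rem
  rw [h]; ring

lemma rem_bound {n : ℕ} {f : (Fin n → ℝ) → ℝ} (hf : ContDiff ℝ 2 f) {M : ℝ}
    (hM : ∀ y v, |fderiv ℝ (fderiv ℝ f) y v v| ≤ M * ‖v‖ ^ 2) (y v : Fin n → ℝ) :
    |rem f y v| ≤ M * ‖v‖ ^ 2 := by
  obtain ⟨θ, hθ, h⟩ := rem_eq hf y v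
  rw [h]
  have h1 := abs_le.1 (hM (y + θ • v) v)
  have h2 := abs_le.1 (hM y v)
  rw [abs_le]
  constructor <;> linarith

lemma growth {n : ℕ} {f : (Fin n → ℝ) → ℝ} (hf : ContDiff ℝ 2 f) {M : ℝ}
    (hM : ∀ y v, |fderiv ℝ (fderiv ℝ f) y v v| ≤ M * ‖v‖ ^ 2) (x : Fin n → ℝ) :
    |f x| ≤ |f 0| + ‖fderiv ℝ f 0‖ * ‖x‖ + M * ‖x‖ ^ 2 := by
  obtain ⟨θ, hθ, h⟩ := taylor2 f hf 0 x
  rw [zero_add] at h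
  rw [h]
  have h1 := hM (0 + θ • x) x
  have h2 := (fderiv ℝ f 0).le_opNorm x
  rw [Real.norm_eq_abs] at h2
  have h3 : |1 / 2 * fderiv ℝ (fderiv ℝ f) (0 + θ • x) x x| ≤ M * ‖x‖ ^ 2 := by
    rw [abs_mul, abs_of_pos (by norm_num : (0:ℝ) < 1 / 2)]
    linarith [abs_nonneg (fderiv ℝ (fderiv ℝ f) (0 + θ • x) x x)]
  refine (abs_add_le _ _).trans (add_le_add ((abs_add_le _ _).trans (add_le_add le_rfl h2)) h3)

lemma int_sq {n : ℕ} (μ : Measure (Fin n → ℝ)) [IsGaussian μ] :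
    Integrable (fun x => ‖x‖ ^ 2) μ := by
  have := IsGaussian.memLp_two_id (μ := μ)
  simpa using this.integrable_norm_pow (by norm_num)

lemma int_norm {n : ℕ} (μ : Measure (Fin n → ℝ)) [IsGaussian μ] :
    Integrable (fun x => ‖x‖) μ := by
  simpa using (IsGaussian.integrable_id (μ := μ)).norm

lemma int_f {n : ℕ} {f : (Fin n → ℝ) → ℝ} (hf : ContDiff ℝ 2 f) {M : ℝ}
    (hM : ∀ y v, |fderiv ℝ (fderiv ℝ f) y v v| ≤ M * ‖v‖ ^ 2)
    (μ : Measure (Fin n → ℝ)) [IsGaussian μ] : Integrable f μ := by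
  refine Integrable.mono' (g := fun x => |f 0| + ‖fderiv ℝ f 0‖ * ‖x‖ + M * ‖x‖ ^ 2) ?_
    hf.continuous.aestronglyMeasurable (ae_of_all _ fun x => growth hf hM x)
  exact ((integrable_const _).add ((int_norm μ).const_mul _)).add ((int_sq μ).const_mul _)

lemma int_coord {n : ℕ} (μ : Measure (Fin n → ℝ)) [IsGaussian μ] (i j : Fin n) :
    Integrable (fun x => x i * x j) μ := by
  refine Integrable.mono' (int_sq μ) (by fun_prop) (ae_of_all _ fun x => ?_)
  rw [norm_mul, sq]
  exact mul_le_mul (norm_le_pi_norm x i) (norm_le_pi_norm x j) (norm_nonneg _) (norm_nonneg _)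

lemma int_rem {n : ℕ} {f : (Fin n → ℝ) → ℝ} (hf : ContDiff ℝ 2 f) {M : ℝ}
    (hM : ∀ y v, |fderiv ℝ (fderiv ℝ f) y v v| ≤ M * ‖v‖ ^ 2)
    (μ : Measure (Fin n → ℝ)) [IsGaussian μ] (s : ℝ) (y : Fin n → ℝ) :
    Integrable (fun v => rem f y (s • v)) μ := by
  refine Integrable.mono' (((int_sq μ).const_mul (s ^ 2)).const_mul M)
    ((rem_cont hf).comp (by fun_prop : Continuous fun v : Fin n → ℝ => (y, s • v))).aestronglyMeasurable
    (ae_of_all _ fun v => ?_)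
  have := rem_bound hf hM y (s • v)
  rwa [norm_smul, mul_pow, Real.norm_eq_abs, sq_abs] at this

/-- One-step expansion at a fixed base point. -/
lemma step_expand {n : ℕ} {f : (Fin n → ℝ) → ℝ} (hf : ContDiff ℝ 2 f) {M : ℝ}
    (hM : ∀ y v, |fderiv ℝ (fderiv ℝ f) y v v| ≤ M * ‖v‖ ^ 2)
    (μ : Measure (Fin n → ℝ)) [IsGaussian μ] (hμ : ∫ x, x ∂μ = 0) (s : ℝ) (y : Fin n → ℝ) :
    ∫ v, f (y + s • v) ∂μ = f y
      + s ^ 2 / 2 * ∑ i, ∑ j, (∫ v, v i * v j ∂μ)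
          * fderiv ℝ (fderiv ℝ f) y (Pi.single i 1) (Pi.single j 1)
      + ∫ v, rem f y (s • v) ∂μ := by
  have hL : Integrable (fun v => fderiv ℝ f y v) μ := IsGaussian.integrable_dual μ _
  have hL0 : ∫ v, fderiv ℝ f y v ∂μ = 0 := by
    rw [IsGaussian.integral_dual, hμ, map_zero]
  have hij : ∀ i j, Integrable (fun v : Fin n → ℝ => v i * v j
      * fderiv ℝ (fderiv ℝ f) y (Pi.single i 1) (Pi.single j 1)) μ :=
    fun i j => (int_coord μ i j).mul_const _
  have hQ : Integrable (fun v : Fin n → ℝ => ∑ i, ∑ j, v i * v j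
      * fderiv ℝ (fderiv ℝ f) y (Pi.single i 1) (Pi.single j 1)) μ :=
    integrable_finsetSum _ fun i _ => integrable_finsetSum _ fun j _ => hij i j
  have hR := int_rem hf hM μ s y
  have e : ∀ v, f (y + s • v) = f y + s * fderiv ℝ f y v
      + s ^ 2 / 2 * (∑ i, ∑ j, v i * v j
      * fderiv ℝ (fderiv ℝ f) y (Pi.single i 1) (Pi.single j 1)) + rem f y (s • v) := by
    intro v
    rw [← hess_expand]
    unfold rem
    simp
    ring
  simp_rw [e]
  have i1 : Integrable (fun v => f y + s * fderiv ℝ f y v) μ :=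
    (integrable_const _).add (hL.const_mul _)
  have i2 : Integrable (fun v : Fin n → ℝ => f y + s * fderiv ℝ f y v
      + s ^ 2 / 2 * (∑ i, ∑ j, v i * v j
      * fderiv ℝ (fderiv ℝ f) y (Pi.single i 1) (Pi.single j 1))) μ := i1.add (hQ.const_mul _)
  rw [integral_add i2 hR, integral_add i1 (hQ.const_mul _),
    integral_add (integrable_const _) (hL.const_mul _), integral_const_mul, hL0,
    integral_const_mul, integral_finsetSum _ fun i _ => integrable_finsetSum _ fun j _ => hij i j]
  simp_rw [integral_finsetSum _ fun j _ => hij _ j, integral_mul_const]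
  simp

lemma step_bound {n : ℕ} {f : (Fin n → ℝ) → ℝ} (hf : ContDiff ℝ 2 f) {M : ℝ}
    (hM : ∀ y v, |fderiv ℝ (fderiv ℝ f) y v v| ≤ M * ‖v‖ ^ 2) {L : ℝ}
    (hL : ∀ y i j, |fderiv ℝ (fderiv ℝ f) y (Pi.single i 1) (Pi.single j 1)| ≤ L)
    (μ ν : Measure (Fin n → ℝ)) [IsGaussian μ] [IsGaussian ν]
    (hμ : ∫ x, x ∂μ = 0) (hν : ∫ x, x ∂ν = 0) (s : ℝ) (y : Fin n → ℝ) :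
    |(∫ v, f (y + s • v) ∂ν) - ∫ v, f (y + s • v) ∂μ| ≤
      s ^ 2 * (1 / 2 * L * ∑ i, ∑ j, |(∫ v, v i * v j ∂ν) - ∫ v, v i * v j ∂μ|)
      + ((∫ v, |rem f y (s • v)| ∂ν) + ∫ v, |rem f y (s • v)| ∂μ) := by
  rw [step_expand hf hM μ hμ, step_expand hf hM ν hν]
  set H := fun i j => fderiv ℝ (fderiv ℝ f) y (Pi.single i 1) (Pi.single j 1)
  have h1 : |∑ i, ∑ j, ((∫ v, v i * v j ∂ν) - ∫ v, v i * v j ∂μ) * H i j| ≤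
      L * ∑ i, ∑ j, |(∫ v, v i * v j ∂ν) - ∫ v, v i * v j ∂μ| := by
    rw [mul_sum]
    refine (abs_sum_le_sum_abs _ _).trans (sum_le_sum fun i _ => ?_)
    rw [mul_sum]
    refine (abs_sum_le_sum_abs _ _).trans (sum_le_sum fun j _ => ?_)
    rw [abs_mul, mul_comm]
    exact mul_le_mul_of_nonneg_right (hL y i j) (abs_nonneg _)
  have h2 := abs_integral_le_integral_abs (μ := ν) (f := fun v => rem f y (s • v))
  have h3 := abs_integral_le_integral_abs (μ := μ) (f := fun v => rem f y (s • v))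
  have h4 : |s ^ 2 / 2 * ∑ i, ∑ j, ((∫ v, v i * v j ∂ν) - ∫ v, v i * v j ∂μ) * H i j| ≤
      s ^ 2 / 2 * (L * ∑ i, ∑ j, |(∫ v, v i * v j ∂ν) - ∫ v, v i * v j ∂μ|) := by
    rw [abs_mul, abs_of_nonneg (by positivity : 0 ≤ s ^ 2 / 2)]
    gcongr
  simp only [sub_mul, sum_sub_distrib, mul_sub] at h4
  rw [abs_le] at *
  simp only [H] at *
  constructor <;> linarith

/-- The remainder is `o(s²)` along moving base points. -/
lemma rem_tendsto {n : ℕ} {f : (Fin n → ℝ) → ℝ} (hf : ContDiff ℝ 2 f)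
    {l : Filter ℝ} {s : ℝ → ℝ} (hs : Filter.Tendsto s l (nhds 0)) (hs0 : ∀ᶠ h in l, s h ≠ 0)
    {Y : ℝ → Fin n → ℝ} {y : Fin n → ℝ} (hY : Filter.Tendsto Y l (nhds y)) (v : Fin n → ℝ) :
    Filter.Tendsto (fun h => |rem f (Y h) (s h • v)| / s h ^ 2) l (nhds 0) := by
  choose θ hθ e using fun h => rem_eq hf (Y h) (s h • v)
  have hz : Filter.Tendsto (fun h => Y h + θ h • s h • v) l (nhds y) := by
    have : Filter.Tendsto (fun h => θ h * s h) l (nhds 0) := by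
      refine squeeze_zero_norm (fun h => ?_) (tendsto_norm_zero.comp hs)
      rw [norm_mul]
      have : ‖θ h‖ ≤ 1 := by
        rw [Real.norm_eq_abs, abs_of_pos (hθ h).1]; exact (hθ h).2.le
      simpa using mul_le_mul_of_nonneg_right this (norm_nonneg (s h))
    have := hY.add (this.smul_const v)
    simpa [mul_smul] using this
  have hc : Continuous fun z => fderiv ℝ (fderiv ℝ f) z v v := by
    have := cont_d2 hf
    fun_prop
  have h1 := ((hc.tendsto y).comp hz).sub ((hc.tendsto y).comp hY)
  have h2 := (h1.const_mul (1 / 2)).abs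
  simp only [sub_self, mul_zero, abs_zero] at h2
  refine h2.congr' ?_
  filter_upwards [hs0] with h hh
  rw [e h]
  simp only [map_smul, _root_.smul_apply, smul_eq_mul, Function.comp]
  have key : ∀ a b : ℝ, |1 / 2 * (a - b)| =
      |1 / 2 * (s h * (s h * a) - s h * (s h * b))| / s h ^ 2 := by
    intro a b
    have : 1 / 2 * (s h * (s h * a) - s h * (s h * b)) = s h ^ 2 * (1 / 2 * (a - b)) := by ring
    rw [this, abs_mul (s h ^ 2), abs_of_nonneg (sq_nonneg (s h)), mul_div_cancel_left₀ _ (pow_ne_zero 2 hh)]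
  exact key _ _

lemma conv_eq_map {n : ℕ} (a c : ℝ) (μ ν : Measure (Fin n → ℝ)) [IsGaussian μ] [IsGaussian ν] :
    (scal a μ).conv (scal c ν) = (μ.prod ν).map (fun p => a • p.1 + c • p.2) := by
  unfold scal Measure.conv
  rw [Measure.map_prod_map _ _ (by fun_prop) (by fun_prop), Measure.map_map (by fun_prop) (by fun_prop)]
  rfl

lemma int_rem_prod {n : ℕ} {f : (Fin n → ℝ) → ℝ} (hf : ContDiff ℝ 2 f) {M : ℝ}
    (hM : ∀ y v, |fderiv ℝ (fderiv ℝ f) y v v| ≤ M * ‖v‖ ^ 2)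
    {Z : Type*} [MeasurableSpace Z] (P : Measure Z) [IsProbabilityMeasure P]
    (Y : Z → Fin n → ℝ) (hY : Measurable Y)
    (κ : Measure (Fin n → ℝ)) [IsGaussian κ] (s : ℝ) :
    Integrable (fun p : Z × (Fin n → ℝ) => |rem f (Y p.1) (s • p.2)|) (P.prod κ) := by
  refine Integrable.mono' (g := fun p => M * (s ^ 2 * ‖p.2‖ ^ 2))
    (((((int_sq κ).comp_snd P)).const_mul (s ^ 2)).const_mul M) ?_ (ae_of_all _ fun p => ?_)
  · exact ((rem_cont hf).abs.measurable.comp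
      (by fun_prop : Measurable fun p : Z × (Fin n → ℝ) => (Y p.1, s • p.2))).aestronglyMeasurable
  · have := rem_bound hf hM (Y p.1) (s • p.2)
    rw [norm_smul, mul_pow, Real.norm_eq_abs, sq_abs] at this
    simpa using this

lemma J_tendsto {n : ℕ} {f : (Fin n → ℝ) → ℝ} (hf : ContDiff ℝ 2 f) {M : ℝ}
    (hM : ∀ y v, |fderiv ℝ (fderiv ℝ f) y v v| ≤ M * ‖v‖ ^ 2)
    (μ ν κ : Measure (Fin n → ℝ)) [IsGaussian μ] [IsGaussian ν] [IsGaussian κ] (t : ℝ) :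
    Filter.Tendsto (fun h : ℝ => (∫ p, |rem f (√(1 - t - h) • p.1.1 + √t • p.1.2) (√h • p.2)|
      ∂((μ.prod ν).prod κ)) / h) (nhdsWithin 0 (Set.Ioi 0)) (nhds 0) := by
  have hs : Filter.Tendsto (fun h : ℝ => √h) (nhdsWithin 0 (Set.Ioi 0)) (nhds 0) := by
    have := (Real.continuous_sqrt.tendsto 0).mono_left (nhdsWithin_le_nhds (s := Set.Ioi 0))
    simpa using this
  have hpos : ∀ᶠ h : ℝ in nhdsWithin 0 (Set.Ioi 0), 0 < h := self_mem_nhdsWithin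
  have main := tendsto_integral_filter_of_dominated_convergence
    (μ := (μ.prod ν).prod κ) (l := nhdsWithin (0 : ℝ) (Set.Ioi 0))
    (F := fun h p => |rem f (√(1 - t - h) • p.1.1 + √t • p.1.2) (√h • p.2)| / √h ^ 2)
    (f := fun _ => 0) (fun p => M * ‖p.2‖ ^ 2) ?_ ?_
    (((int_sq κ).comp_snd (μ.prod ν)).const_mul M) ?_
  · rw [integral_zero] at main
    refine main.congr' ?_
    filter_upwards [hpos] with h hh
    rw [integral_div, Real.sq_sqrt hh.le]
  · refine Filter.Eventually.of_forall fun h => ?_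
    exact ((int_rem_prod hf hM (μ.prod ν) (fun p => √(1 - t - h) • p.1 + √t • p.2) (by fun_prop)
      κ √h).div_const _).aestronglyMeasurable
  · filter_upwards [hpos] with h hh
    refine ae_of_all _ fun p => ?_
    have := rem_bound hf hM (√(1 - t - h) • p.1.1 + √t • p.1.2) (√h • p.2)
    rw [norm_smul, mul_pow, Real.norm_eq_abs, sq_abs] at this
    have h2 : 0 < √h ^ 2 := by positivity
    rw [Real.norm_eq_abs, abs_div, abs_abs, abs_of_pos h2, div_le_iff₀ h2]
    linarith
  · refine ae_of_all _ fun p => ?_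
    refine rem_tendsto hf hs ?_ (y := √(1 - t) • p.1.1 + √t • p.1.2) ?_ p.2
    · filter_upwards [hpos] with h hh
      positivity
    · have : Continuous fun h : ℝ => √(1 - t - h) • p.1.1 + √t • p.1.2 := by fun_prop
      have := (this.tendsto 0).mono_left (nhdsWithin_le_nhds (s := Set.Ioi 0))
      simpa using this

/-- interpolation -/
noncomputable def phi {n : ℕ} (f : (Fin n → ℝ) → ℝ) (μ ν : Measure (Fin n → ℝ)) (t : ℝ) : ℝ :=
  ∫ x, f x ∂((scal √(1 - t) μ).conv (scal √t ν))

lemma incr {n : ℕ} {f : (Fin n → ℝ) → ℝ} (hf : ContDiff ℝ 2 f) {M : ℝ}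
    (hM : ∀ y v, |fderiv ℝ (fderiv ℝ f) y v v| ≤ M * ‖v‖ ^ 2) {L : ℝ}
    (hL : ∀ y i j, |fderiv ℝ (fderiv ℝ f) y (Pi.single i 1) (Pi.single j 1)| ≤ L)
    (μ ν : Measure (Fin n → ℝ)) [IsGaussian μ] [IsGaussian ν]
    (hμ : ∫ x, x ∂μ = 0) (hν : ∫ x, x ∂ν = 0) (t h : ℝ) (ht : 0 ≤ t) (hh : 0 < h)
    (hth : t + h ≤ 1) :
    |phi f μ ν (t + h) - phi f μ ν t| ≤
      h * (1 / 2 * L * ∑ i, ∑ j, |(∫ v, v i * v j ∂ν) - ∫ v, v i * v j ∂μ|)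
      + ((∫ p, |rem f (√(1 - t - h) • p.1.1 + √t • p.1.2) (√h • p.2)| ∂((μ.prod ν).prod ν))
      + ∫ p, |rem f (√(1 - t - h) • p.1.1 + √t • p.1.2) (√h • p.2)| ∂((μ.prod ν).prod μ)) := by
  set ρ := (scal √(1 - t - h) μ).conv (scal √t ν) with hρ
  have e1 : (scal √(1 - (t + h)) μ).conv (scal √(t + h) ν) = ρ.conv (scal √h ν) := by
    have : √(t + h) = √(√t ^ 2 + √h ^ 2) := by rw [Real.sq_sqrt ht, Real.sq_sqrt hh.le]
    rw [hρ, Measure.conv_assoc, scal_conv _ _ ν hν, this, sub_add_eq_sub_sub]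
  have e2 : (scal √(1 - t) μ).conv (scal √t ν) = ρ.conv (scal √h μ) := by
    have : √(1 - t) = √(√(1 - t - h) ^ 2 + √h ^ 2) := by
      rw [Real.sq_sqrt (by linarith), Real.sq_sqrt hh.le]; congr 1; ring
    rw [hρ, Measure.conv_assoc, Measure.conv_comm (scal √t ν), ← Measure.conv_assoc,
      scal_conv _ _ μ hμ, this]
  have I : ∀ κ : Measure (Fin n → ℝ), IsGaussian κ →
      Integrable (fun y => ∫ v, f (y + √h • v) ∂κ) ρ ∧
      ∫ x, f x ∂(ρ.conv (scal √h κ)) = ∫ y, ∫ v, f (y + √h • v) ∂κ ∂ρ := by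
    intro κ _
    have e : ∀ y, ∫ v, f (y + v) ∂(scal √h κ) = ∫ v, f (y + √h • v) ∂κ := fun y =>
      integral_scal _ _ (fun v => f (y + v)) (by have := hf.continuous; fun_prop)
    have hi := int_f hf hM (ρ.conv (scal √h κ))
    constructor
    · simp_rw [← e]
      unfold Measure.conv at hi
      rw [integrable_map_measure hi.1 (by fun_prop)] at hi
      exact hi.integral_prod_left
    · rw [integral_conv hi]
      simp_rw [e]
  have J : ∀ κ : Measure (Fin n → ℝ), IsGaussian κ →
      Integrable (fun y => ∫ v, |rem f y (√h • v)| ∂κ) ρ ∧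
      ∫ y, ∫ v, |rem f y (√h • v)| ∂κ ∂ρ =
      ∫ p, |rem f (√(1 - t - h) • p.1.1 + √t • p.1.2) (√h • p.2)| ∂((μ.prod ν).prod κ) := by
    intro κ _
    have h1 := (int_rem_prod hf hM ρ id measurable_id κ √h).integral_prod_left
    refine ⟨h1, ?_⟩
    rw [integral_prod _ (int_rem_prod hf hM (μ.prod ν)
      (fun p => √(1 - t - h) • p.1 + √t • p.2) (by fun_prop) κ √h)]
    have h2 := h1.1
    rw [hρ, conv_eq_map] at h2 ⊢
    exact integral_map (by fun_prop) h2
  unfold phi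
  rw [e1, e2, (I μ ‹_›).2, (I ν ‹_›).2, ← (J μ ‹_›).2, ← (J ν ‹_›).2,
    ← integral_sub (I ν ‹_›).1 (I μ ‹_›).1, ← integral_add (J ν ‹_›).1 (J μ ‹_›).1]
  have hc : ∀ C : ℝ, C = ∫ _, C ∂ρ := fun C => by simp
  have JJ : Integrable (fun y => (∫ v, |rem f y (√h • v)| ∂ν) + ∫ v, |rem f y (√h • v)| ∂μ) ρ :=
    (J ν ‹_›).1.add (J μ ‹_›).1
  rw [hc (h * _), ← integral_add (integrable_const _) JJ]
  refine (abs_integral_le_integral_abs).trans (integral_mono ((I ν ‹_›).1.sub (I μ ‹_›).1).abs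
    ((integrable_const _).add JJ) fun y => ?_)
  have := step_bound hf hM hL μ ν hμ hν √h y
  rw [Real.sq_sqrt hh.le] at this
  exact this

lemma phi_cont {n : ℕ} {f : (Fin n → ℝ) → ℝ} (hf : ContDiff ℝ 2 f) {M : ℝ}
    (hM0 : 0 ≤ M) (hM : ∀ y v, |fderiv ℝ (fderiv ℝ f) y v v| ≤ M * ‖v‖ ^ 2)
    (μ ν : Measure (Fin n → ℝ)) [IsGaussian μ] [IsGaussian ν] :
    ContinuousOn (phi f μ ν) (Set.Icc 0 1) := by
  have hfc := hf.continuous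
  have e : phi f μ ν = fun t => ∫ p, f (√(1 - t) • p.1 + √t • p.2) ∂(μ.prod ν) := by
    ext t
    unfold phi
    rw [conv_eq_map, integral_map (by fun_prop) hfc.aestronglyMeasurable]
  rw [e]
  refine continuousOn_of_dominated
    (bound := fun p => |f 0| + ‖fderiv ℝ f 0‖ * (‖p.1‖ + ‖p.2‖)
      + M * (2 * (‖p.1‖ ^ 2 + ‖p.2‖ ^ 2))) ?_ ?_ ?_ ?_
  · intro t _
    exact (by fun_prop : Continuous fun p : (Fin n → ℝ) × (Fin n → ℝ) =>
      f (√(1 - t) • p.1 + √t • p.2)).aestronglyMeasurable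
  · intro t ht
    refine ae_of_all _ fun p => ?_
    have h1 : ‖√(1 - t) • p.1 + √t • p.2‖ ≤ ‖p.1‖ + ‖p.2‖ := by
      refine (norm_add_le _ _).trans ?_
      rw [norm_smul, norm_smul, Real.norm_of_nonneg (Real.sqrt_nonneg _),
        Real.norm_of_nonneg (Real.sqrt_nonneg _)]
      have a1 : √(1 - t) ≤ 1 := Real.sqrt_le_one.2 (by linarith [ht.1])
      have a2 : √t ≤ 1 := Real.sqrt_le_one.2 (by linarith [ht.2])
      nlinarith [norm_nonneg p.1, norm_nonneg p.2]
    have h2 : ‖√(1 - t) • p.1 + √t • p.2‖ ^ 2 ≤ 2 * (‖p.1‖ ^ 2 + ‖p.2‖ ^ 2) := by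
      have := pow_le_pow_left₀ (norm_nonneg _) h1 2
      nlinarith [sq_nonneg (‖p.1‖ - ‖p.2‖)]
    refine (growth hf hM _).trans ?_
    gcongr
  · exact ((integrable_const _).add ((((int_norm μ).comp_fst ν).add
      ((int_norm ν).comp_snd μ)).const_mul _)).add (((((int_sq μ).comp_fst ν).add
      ((int_sq ν).comp_snd μ)).const_mul _).const_mul _)
  · refine ae_of_all _ fun p => ?_
    fun_prop

lemma meas_comparison {n : ℕ} {f : (Fin n → ℝ) → ℝ} (hf : ContDiff ℝ 2 f) {M : ℝ}
    (hM0 : 0 ≤ M) (hM : ∀ y v, |fderiv ℝ (fderiv ℝ f) y v v| ≤ M * ‖v‖ ^ 2) {L : ℝ}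
    (hL : ∀ y i j, |fderiv ℝ (fderiv ℝ f) y (Pi.single i 1) (Pi.single j 1)| ≤ L)
    (μ ν : Measure (Fin n → ℝ)) [IsGaussian μ] [IsGaussian ν]
    (hμ : ∫ x, x ∂μ = 0) (hν : ∫ x, x ∂ν = 0) :
    |(∫ x, f x ∂ν) - ∫ x, f x ∂μ| ≤
      1 / 2 * L * ∑ i, ∑ j, |(∫ v, v i * v j ∂ν) - ∫ v, v i * v j ∂μ| := by
  set C := 1 / 2 * L * ∑ i, ∑ j, |(∫ v, v i * v j ∂ν) - ∫ v, v i * v j ∂μ| with hC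
  have hfc := hf.continuous
  have p0 : phi f μ ν 0 = ∫ x, f x ∂μ := by
    unfold phi
    rw [conv_eq_map, integral_map (by fun_prop) hfc.aestronglyMeasurable]
    simp only [sub_zero, Real.sqrt_one, one_smul, Real.sqrt_zero, zero_smul, add_zero]
    rw [integral_fun_fst]; simp
  have p1 : phi f μ ν 1 = ∫ x, f x ∂ν := by
    unfold phi
    rw [conv_eq_map, integral_map (by fun_prop) hfc.aestronglyMeasurable]
    simp only [sub_self, Real.sqrt_one, one_smul, Real.sqrt_zero, zero_smul, zero_add]
    rw [integral_fun_snd]; simp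
  rw [← p0, ← p1]
  refine le_of_forall_pos_le_add fun ε hε => ?_
  have := image_norm_le_of_liminf_right_slope_norm_lt_deriv_boundary (a := 0) (b := 1)
    (f := fun t => phi f μ ν t - phi f μ ν 0) (f' := fun _ => C) 
    ((phi_cont hf hM0 hM μ ν).sub continuousOn_const) ?_
    (B := fun t => (C + ε) * t) (B' := fun _ => C + ε) (by simp) (by fun_prop)
    (fun x _ => by simpa using ((hasDerivAt_id x).const_mul (C + ε)).hasDerivWithinAt)
    (fun _ _ _ => by linarith) (Set.right_mem_Icc.2 zero_le_one)
  · simpa using this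
  · intro t ht r hr
    have T := ((J_tendsto hf hM μ ν ν t).add (J_tendsto hf hM μ ν μ t))
    rw [add_zero] at T
    have T2 : Filter.Tendsto (fun z => z - t) (nhdsWithin t (Set.Ioi t))
        (nhdsWithin 0 (Set.Ioi 0)) := by
      refine tendsto_nhdsWithin_iff.2 ⟨?_, ?_⟩
      · have : Continuous fun z : ℝ => z - t := by fun_prop
        simpa using (this.tendsto t).mono_left (nhdsWithin_le_nhds (s := Set.Ioi t))
      · filter_upwards [self_mem_nhdsWithin] with z hz
        exact sub_pos.2 (Set.mem_Ioi.1 hz)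
    have E := (T.comp T2).eventually (gt_mem_nhds (sub_pos.2 hr))
    have E2 : ∀ᶠ z in nhdsWithin t (Set.Ioi t), z < 1 :=
      (gt_mem_nhds ht.2).filter_mono nhdsWithin_le_nhds
    refine Filter.Eventually.frequently ?_
    filter_upwards [E, E2, self_mem_nhdsWithin] with z hz hz1 hzt
    have hh : 0 < z - t := sub_pos.2 hzt
    have b := incr hf hM hL μ ν hμ hν t (z - t) ht.1 hh (by linarith)
    rw [← hC, add_sub_cancel] at b
    have nn := abs_sub_abs_le_abs_sub (phi f μ ν z - phi f μ ν 0) (phi f μ ν t - phi f μ ν 0)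
    rw [sub_sub_sub_cancel_right] at nn
    rw [slope_def_field, div_lt_iff₀ hh]
    simp only [Function.comp, Real.norm_eq_abs] at hz ⊢
    rw [← add_div, div_lt_iff₀ hh] at hz
    linarith

lemma law_gauss {Ω : Type*} [MeasureSpace Ω] [IsProbabilityMeasure (ℙ : Measure Ω)]
    {n : ℕ} (U : Fin n → Ω → ℝ) (hUm : ∀ i, Measurable (U i))
    (v : (Fin n → ℝ) → NNReal)
    (hUgauss : ∀ t : Fin n → ℝ,
      Measure.map (fun ω => ∑ i, t i * U i ω) ℙ = gaussianReal 0 (v t)) :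
    IsGaussian (Measure.map (fun ω i => U i ω) (ℙ : Measure Ω)) ∧
      ∫ x, x ∂(Measure.map (fun ω i => U i ω) (ℙ : Measure Ω)) = 0 := by
  have hm : Measurable fun ω i => U i ω := measurable_pi_lambda _ hUm
  have key : ∀ L : StrongDual ℝ (Fin n → ℝ),
      (Measure.map (fun ω i => U i ω) (ℙ : Measure Ω)).map L =
        gaussianReal 0 (v fun i => L (Pi.single i 1)) := by
    intro L
    rw [← hUgauss, Measure.map_map (by fun_prop) hm]
    congr 1
    ext ω
    have hv : (fun i => U i ω) = ∑ i, U i ω • (Pi.single i 1 : Fin n → ℝ) := by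
      ext k; simp [Finset.sum_apply, Pi.single_apply]
    simp only [Function.comp]
    rw [hv]
    simp [mul_comm]
  have G : IsGaussian (Measure.map (fun ω i => U i ω) (ℙ : Measure Ω)) :=
    isGaussian_of_map_eq_gaussianReal fun L => ⟨_, _, key L⟩
  refine ⟨G, ?_⟩
  ext i
  have h1 := IsGaussian.integral_dual (μ := Measure.map (fun ω i => U i ω) (ℙ : Measure Ω))
    (ContinuousLinearMap.proj i)
  have h2 : ∫ x, x ∂((Measure.map (fun ω i => U i ω) (ℙ : Measure Ω)).map
      (ContinuousLinearMap.proj i : StrongDual ℝ (Fin n → ℝ))) = 0 := by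
    rw [key]; exact integral_id_gaussianReal
  rw [integral_map (by fun_prop) (by fun_prop)] at h2
  rw [h2] at h1
  exact h1.symm

/-- **Gaussian comparison via interpolation.**  If `U` and `W` are independent centered
Gaussian vectors with covariance matrices `St` and `S` respectively, and `f` is twice
continuously differentiable with all second order partial derivatives (including mixed ones)
bounded by `L₂`, then `|E f(W) - E f(U)| ≤ (1/2) L₂ ∑_{i,j} |Sᵢⱼ - Stᵢⱼ|`. -/
theorem gaussian_comparison
    {Ω : Type*} [MeasureSpace Ω] [IsProbabilityMeasure (ℙ : Measure Ω)]
    {n : ℕ} (U W : Fin n → Ω → ℝ)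
    (hUm : ∀ i, Measurable (U i)) (hWm : ∀ i, Measurable (W i))
    (hindep : IndepFun (fun ω i => U i ω) (fun ω i => W i ω) ℙ)
    (St S : Matrix (Fin n) (Fin n) ℝ)
    (hSt : ∀ i j, St i j = ∫ ω, U i ω * U j ω ∂ℙ)
    (hS : ∀ i j, S i j = ∫ ω, W i ω * W j ω ∂ℙ)
    (hUgauss : ∀ t : Fin n → ℝ,
      Measure.map (fun ω => ∑ i, t i * U i ω) ℙ
        = gaussianReal 0 (∑ i, ∑ j, t i * St i j * t j).toNNReal)
    (hWgauss : ∀ t : Fin n → ℝ,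
      Measure.map (fun ω => ∑ i, t i * W i ω) ℙ
        = gaussianReal 0 (∑ i, ∑ j, t i * S i j * t j).toNNReal)
    (f : (Fin n → ℝ) → ℝ) (hf : ContDiff ℝ 2 f) (L₂ : ℝ)
    (hL2 : ∀ (x : Fin n → ℝ) (i j : Fin n),
      |iteratedFDeriv ℝ 2 f x ![Pi.single i 1, Pi.single j 1]| ≤ L₂) :
    |(∫ ω, f (fun i => W i ω) ∂ℙ) - ∫ ω, f (fun i => U i ω) ∂ℙ|
      ≤ (1 / 2) * L₂ * ∑ i, ∑ j, |S i j - St i j| := by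
  have hmU : Measurable fun ω i => U i ω := measurable_pi_lambda _ hUm
  have hmW : Measurable fun ω i => W i ω := measurable_pi_lambda _ hWm
  obtain ⟨GU, cU⟩ := law_gauss U hUm _ hUgauss
  obtain ⟨GW, cW⟩ := law_gauss W hWm _ hWgauss
  have hL : ∀ y i j, |fderiv ℝ (fderiv ℝ f) y (Pi.single i 1) (Pi.single j 1)| ≤ L₂ := by
    intro y i j
    simpa [iteratedFDeriv_two_apply] using hL2 y i j
  have hfc := hf.continuous
  have main := meas_comparison hf (M := n ^ 2 * |L₂|) (by positivity)
    (fun y v => hess_bound _ L₂ (hL y) v) hL _ _ cU cW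
  rw [integral_map hmU.aemeasurable hfc.aestronglyMeasurable,
    integral_map hmW.aemeasurable hfc.aestronglyMeasurable] at main
  have eU : ∀ i j, ∫ v : Fin n → ℝ, v i * v j ∂(Measure.map (fun ω i => U i ω) (ℙ : Measure Ω))
      = St i j := fun i j => by
    rw [hSt, integral_map hmU.aemeasurable (by fun_prop)]
  have eW : ∀ i j, ∫ v : Fin n → ℝ, v i * v j ∂(Measure.map (fun ω i => W i ω) (ℙ : Measure Ω))
      = S i j := fun i j => by
    rw [hS, integral_map hmW.aemeasurable (by fun_prop)]
  simp_rw [eU, eW] at main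
  exact main
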